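/- arXiv:0811.3530 — 4 statements merged into one kernel-verified Lean document; each statement's English description precedes it below -/
import Mathlib

section
/- Let S ∈ ℝ^{n×n} be skew-symmetric, let H ∈ ℝ^{m×n} be such that the pair (H,S) is observable, and let Γ ∈ ℝ^{p×p} be a connected interconnection. Let r ∈ ℝ^p satisfy rᵀΓ = 0 and rᵀ1 = 1. Then for every initial vector ξ(0) ∈ ℝ^{pn}, the solution ξ(t) = exp(t(I_p ⊗ S + Γ ⊗ HᵀH)) ξ(0) of the coupled array ξ̇_i = Sξ_i + HᵀH Σ_j γ_ij(ξ_j − ξ_i) satisfies |ξ(t) − (1rᵀ ⊗ exp(tS)) ξ(0)| → 0 as t → ∞; in particular the blocks ξ_i(t) synchronize to ξ̄(t) = (rᵀ ⊗ exp(tS)) ξ(0). -/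
open Matrix Filter Topology
open scoped Kronecker

/-- `Γ` is an interconnection: off-diagonal entries are nonnegative and each diagonal
entry is minus the sum of the other entries in its row (equivalently, rows sum to zero). -/
def IsInterconnection {p : ℕ} (Γ : Matrix (Fin p) (Fin p) ℝ) : Prop :=
  (∀ i j, i ≠ j → 0 ≤ Γ i j) ∧ ∀ i, ∑ j, Γ i j = 0

/-- `Γ` is a connected interconnection: it is an interconnection and its graph
(with an edge `(i, j)` whenever `Γ i j > 0`) has a node reachable by a directed
path from every other node. -/
def IsConnectedInterconnection {p : ℕ} (Γ : Matrix (Fin p) (Fin p) ℝ) : Prop :=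
  IsInterconnection Γ ∧
    ∃ k : Fin p, ∀ i : Fin p, Relation.ReflTransGen (fun a b => 0 < Γ a b) i k

/-!
Let `R = 1rᵀ`. Since `RΓ = ΓR = 0` and `R² = R`, the projection `R ⊗ 1` intertwines the array
`1 ⊗ S + Γ ⊗ HᵀH` with the uncoupled array `1 ⊗ S`, and the complementary projection intertwines it
with `1 ⊗ S + (Γ - R) ⊗ HᵀH`. The first component of the solution is exactly the claimed limit, so
the error is governed by the second array, and it suffices that this one is Hurwitz.

Triangularizing the first Kronecker factor, each eigenvalue of `1 ⊗ S + (Γ - R) ⊗ HᵀH` is an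
eigenvalue of `S + l HᵀH` for some eigenvalue `l` of `Γ - R`. A maximum principle on the graph shows
`re l < 0`: subtracting `R` removes the eigenvalue `0` of the constant vectors, the only one of `Γ`
in the closed right half-plane. Finally, if `S x + l HᵀH x = μ x` with `0 ≤ re μ`, then pairing with
`x` forces `H x = 0`, so `x` is an undamped mode of `S` invisible to `H`, which observability
excludes.
-/

section Spectrum

variable {K ι κ : Type*} [Field K] [Fintype ι] [DecidableEq ι] [Fintype κ] [DecidableEq κ]

theorem mem_spectrum_iff_exists_mulVec_eq_smul {M : Matrix ι ι K} {μ : K} :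
    μ ∈ spectrum K M ↔ ∃ v : ι → K, v ≠ 0 ∧ M *ᵥ v = μ • v := by
  rw [← Matrix.spectrum_toLin', ← Module.End.hasEigenvalue_iff_mem_spectrum]
  constructor
  · intro hμ
    obtain ⟨v, hv⟩ := hμ.exists_hasEigenvector
    exact ⟨v, hv.2, by simpa using hv.apply_eq_smul⟩
  · rintro ⟨v, hv, hMv⟩
    exact Module.End.hasEigenvalue_of_hasEigenvector
      ⟨Module.End.mem_eigenspace_iff.2 (by simpa using hMv), hv⟩

theorem spectrum_transpose (M : Matrix ι ι K) : spectrum K Mᵀ = spectrum K M := by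
  ext μ
  simp only [Matrix.mem_spectrum_iff_isRoot_charpoly, Matrix.charpoly_transpose]

theorem generalizedEigenvector_induction [IsAlgClosed K] {M : Matrix ι ι K} {P : (ι → K) → Prop}
    (zero : P 0) (add : ∀ v w, P v → P w → P (v + w))
    (genEigenvector : ∀ μ ∈ spectrum K M, ∀ (k : ℕ) (v : ι → K),
      (M - μ • (1 : Matrix ι ι K)) ^ k *ᵥ v = 0 → P v) (v : ι → K) : P v := by
  have hv : v ∈ ⨆ μ : K, Module.End.maxGenEigenspace M.toLin' μ := by
    rw [Module.End.iSup_maxGenEigenspace_eq_top]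
    trivial
  induction hv using Submodule.iSup_induction' with
  | zero => exact zero
  | add x y _ _ hx hy => exact add x y hx hy
  | mem μ v hv =>
    by_cases hv0 : v = 0
    · exact hv0 ▸ zero
    have hμ : μ ∈ spectrum K M := by
      rw [← Matrix.spectrum_toLin', ← Module.End.hasEigenvalue_iff_mem_spectrum]
      have : Module.End.HasUnifEigenvalue M.toLin' μ ⊤ := fun h => hv0 (by simpa [h] using hv)
      exact this.lt zero_lt_one
    obtain ⟨k, hk⟩ := (Module.End.mem_maxGenEigenspace _ _ _).1 hv
    refine genEigenvector μ hμ k v ?_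
    rwa [Module.End.one_eq_id, ← Matrix.toLin'_one, ← map_smul, ← map_sub, ← Matrix.toLin'_pow,
      Matrix.toLin'_apply] at hk

/-- If no `A + l • B` had the eigenvalue `μ`, a solution `X` of this equation would
kill every generalized eigenvector of `G`, by induction along its chain. -/
theorem eq_zero_of_mul_add_mul_mul_eq_smul [IsAlgClosed K] {A B : Matrix ι ι K} {G : Matrix κ κ K}
    {X : Matrix ι κ K} {μ : K} (hμ : ∀ l ∈ spectrum K G, μ ∉ spectrum K (A + l • B))
    (hX : A * X + B * X * G = μ • X) : X = 0 := by
  suffices hker : ∀ w, X *ᵥ w = 0 from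
    Matrix.ext_of_mulVec_single fun i => by rw [hker, Matrix.zero_mulVec]
  have hXw (w : κ → K) : A *ᵥ (X *ᵥ w) + B *ᵥ (X *ᵥ (G *ᵥ w)) = μ • (X *ᵥ w) := by
    simpa [Matrix.add_mulVec, Matrix.smul_mulVec, Matrix.mul_assoc] using congr($hX *ᵥ w)
  refine generalizedEigenvector_induction (M := G) (by simp)
    (fun v w hv hw => by rw [Matrix.mulVec_add, hv, hw, add_zero]) fun l hl k => ?_
  induction k with
  | zero => simp
  | succ k ih =>
    intro w hw
    have hchain : X *ᵥ ((G - l • (1 : Matrix κ κ K)) *ᵥ w) = 0 :=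
      ih _ (by rwa [Matrix.mulVec_mulVec, ← pow_succ])
    have hGw : X *ᵥ (G *ᵥ w) = l • (X *ᵥ w) := by
      rwa [Matrix.sub_mulVec, Matrix.smul_mulVec, Matrix.one_mulVec, Matrix.mulVec_sub,
        Matrix.mulVec_smul, sub_eq_zero] at hchain
    by_contra hne
    refine hμ l hl (mem_spectrum_iff_exists_mulVec_eq_smul.2 ⟨X *ᵥ w, hne, ?_⟩)
    rw [← hXw, hGw, Matrix.add_mulVec, Matrix.smul_mulVec, Matrix.mulVec_smul]

theorem spectrum_one_kronecker_add_kronecker_subset [IsAlgClosed K] (A B : Matrix ι ι K)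
    (G : Matrix κ κ K) :
    spectrum K ((1 : Matrix κ κ K) ⊗ₖ A + G ⊗ₖ B) ⊆
      ⋃ l ∈ spectrum K G, spectrum K (A + l • B) := by
  intro μ hμ
  by_contra hne
  simp only [Set.mem_iUnion, not_exists] at hne
  obtain ⟨v, hv0, hv⟩ := mem_spectrum_iff_exists_mulVec_eq_smul.1 hμ
  obtain ⟨X, rfl⟩ := Matrix.vec_bijective.surjective v
  refine hv0 (Matrix.vec_eq_zero_iff.2 (eq_zero_of_mul_add_mul_mul_eq_smul (A := A) (B := B)
    (G := Gᵀ) (μ := μ) (by simpa only [spectrum_transpose] using hne) (Matrix.vec_inj.1 ?_)))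
  simpa [Matrix.add_mulVec, Matrix.kronecker_mulVec_vec] using hv

end Spectrum

section Exponential

variable {ι κ : Type*} [Fintype ι] [DecidableEq ι] [Fintype κ] [DecidableEq κ]

open scoped Matrix.Norms.Operator in
theorem hasSum_exp_mulVec {𝕜 : Type*} [RCLike 𝕜] (M : Matrix ι ι 𝕜) (v : ι → 𝕜) :
    HasSum (fun k : ℕ => (k.factorial : 𝕜)⁻¹ • (M ^ k *ᵥ v)) (NormedSpace.exp M *ᵥ v) := by
  have hcont : Continuous fun A : Matrix ι ι 𝕜 => A *ᵥ v := by fun_prop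
  have hsum := (NormedSpace.exp_series_hasSum_exp' (𝕂 := 𝕜) M).map
    ((Matrix.mulVecBilin 𝕜 𝕜).flip v).toAddMonoidHom hcont
  convert hsum using 1
  · ext k : 1
    simp
  · rfl

theorem exp_mulVec_eq_sum_of_pow_mulVec_eq_zero {𝕜 : Type*} [RCLike 𝕜] {N : Matrix ι ι 𝕜}
    {k : ℕ} {v : ι → 𝕜} (hN : N ^ k *ᵥ v = 0) :
    NormedSpace.exp N *ᵥ v =
      ∑ j ∈ Finset.range k, (j.factorial : 𝕜)⁻¹ • (N ^ j *ᵥ v) := by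
  refine (hasSum_exp_mulVec N v).unique (hasSum_sum_of_ne_finset_zero fun j hj => ?_)
  obtain ⟨d, rfl⟩ := Nat.exists_eq_add_of_le' (not_lt.1 (Finset.mem_range.not.1 hj))
  rw [pow_add, ← Matrix.mulVec_mulVec, hN, Matrix.mulVec_zero, smul_zero]

open scoped Matrix.Norms.Operator in
theorem exp_smul_one_add (c : ℂ) (N : Matrix ι ι ℂ) :
    NormedSpace.exp (c • (1 : Matrix ι ι ℂ) + N) = Complex.exp c • NormedSpace.exp N := by
  have hscalar : NormedSpace.exp (c • (1 : Matrix ι ι ℂ)) = Complex.exp c • 1 := by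
    have hcomm := NormedSpace.algebraMap_exp_comm (𝕂 := ℂ) (𝔸 := Matrix ι ι ℂ) c
    rw [Algebra.algebraMap_eq_smul_one, Algebra.algebraMap_eq_smul_one] at hcomm
    rw [Complex.exp_eq_exp_ℂ]
    exact hcomm.symm
  rw [Matrix.exp_add_of_commute _ _ ((Commute.one_left N).smul_left c), hscalar, smul_mul_assoc,
    one_mul]

theorem exp_smul_mulVec_of_generalizedEigenvector {M : Matrix ι ι ℂ} {μ : ℂ} {k : ℕ} {v : ι → ℂ}
    (hv : (M - μ • (1 : Matrix ι ι ℂ)) ^ k *ᵥ v = 0) (t : ℝ) :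
    NormedSpace.exp (t • M) *ᵥ v = ∑ j ∈ Finset.range k,
      (Complex.exp (t * μ) * (t : ℂ) ^ j) •
        ((j.factorial : ℂ)⁻¹ • ((M - μ • (1 : Matrix ι ι ℂ)) ^ j *ᵥ v)) := by
  set N := M - μ • (1 : Matrix ι ι ℂ) with hN
  have hM : t • M = ((t : ℂ) * μ) • (1 : Matrix ι ι ℂ) + (t : ℂ) • N := by
    rw [hN, smul_sub, smul_smul, Complex.coe_smul]
    abel
  have htN : ((t : ℂ) • N) ^ k *ᵥ v = 0 := by rw [smul_pow, Matrix.smul_mulVec, hv, smul_zero]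
  rw [hM, exp_smul_one_add, Matrix.smul_mulVec, exp_mulVec_eq_sum_of_pow_mulVec_eq_zero htN,
    Finset.smul_sum]
  refine Finset.sum_congr rfl fun j _ => ?_
  rw [smul_pow, Matrix.smul_mulVec, smul_comm _ ((t : ℂ) ^ j), smul_smul]

theorem exp_smul_mulVec_of_mulVec_eq_smul {M : Matrix ι ι ℂ} {μ : ℂ} {v : ι → ℂ}
    (hv : M *ᵥ v = μ • v) (t : ℝ) :
    NormedSpace.exp (t • M) *ᵥ v = Complex.exp (t * μ) • v := by
  have hv1 : (M - μ • (1 : Matrix ι ι ℂ)) ^ 1 *ᵥ v = 0 := by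
    rw [pow_one, Matrix.sub_mulVec, hv, Matrix.smul_mulVec, Matrix.one_mulVec, sub_self]
  simpa using exp_smul_mulVec_of_generalizedEigenvector hv1 t

open scoped Matrix.Norms.Operator in
theorem exp_smul_map_ofReal (M : Matrix ι ι ℝ) (t : ℝ) :
    (NormedSpace.exp (t • M)).map Complex.ofRealHom =
      NormedSpace.exp (t • M.map Complex.ofRealHom) := by
  have hcont : Continuous (Complex.ofRealHom.mapMatrix : Matrix ι ι ℝ →+* Matrix ι ι ℂ) :=
    continuous_id.matrix_map Complex.continuous_ofReal
  have hsmul : t • M.map Complex.ofRealHom = Complex.ofRealHom.mapMatrix (t • M) := by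
    ext i j
    simp
  rw [hsmul]
  exact NormedSpace.map_exp (Complex.ofRealHom.mapMatrix : Matrix ι ι ℝ →+* Matrix ι ι ℂ) hcont
    (t • M)

open scoped Matrix.Norms.Operator in
theorem exp_one_kronecker {𝕜 : Type*} [RCLike 𝕜] (M : Matrix ι ι 𝕜) :
    NormedSpace.exp ((1 : Matrix κ κ 𝕜) ⊗ₖ M) = (1 : Matrix κ κ 𝕜) ⊗ₖ NormedSpace.exp M := by
  let f : Matrix ι ι 𝕜 →+* Matrix (κ × ι) (κ × ι) 𝕜 :=
    { toFun := fun M => (1 : Matrix κ κ 𝕜) ⊗ₖ M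
      map_one' := Matrix.one_kronecker_one
      map_mul' := fun A B => by rw [← Matrix.mul_kronecker_mul, one_mul]
      map_zero' := Matrix.kronecker_zero _
      map_add' := Matrix.kronecker_add _ }
  have hf : Continuous f := continuous_matrix fun i j =>
    continuous_const.mul (continuous_id.matrix_elem i.2 j.2)
  exact (NormedSpace.map_exp f hf M).symm

open scoped Matrix.Norms.Operator in
theorem mul_exp_eq_exp_mul_of_semiconjBy {𝕜 : Type*} [RCLike 𝕜] {X A B : Matrix ι ι 𝕜}
    (h : SemiconjBy X A B) : X * NormedSpace.exp A = NormedSpace.exp B * X :=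
  h.exp_right

end Exponential

section Complexification

variable {ι κ : Type*} [Fintype κ]

theorem re_comp_map_ofReal_mulVec (M : Matrix ι κ ℝ) (x : κ → ℂ) :
    Complex.re ∘ (M.map Complex.ofRealHom *ᵥ x) = M *ᵥ (Complex.re ∘ x) := by
  ext i
  simp [Matrix.mulVec, dotProduct]

theorem im_comp_map_ofReal_mulVec (M : Matrix ι κ ℝ) (x : κ → ℂ) :
    Complex.im ∘ (M.map Complex.ofRealHom *ᵥ x) = M *ᵥ (Complex.im ∘ x) := by
  ext i
  simp [Matrix.mulVec, dotProduct]

theorem tendsto_zero_of_re_of_im {α : Type*} {l : Filter α} {f : α → ι → ℂ}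
    (hre : Tendsto (fun a => Complex.re ∘ f a) l (𝓝 0))
    (him : Tendsto (fun a => Complex.im ∘ f a) l (𝓝 0)) : Tendsto f l (𝓝 0) := by
  rw [tendsto_pi_nhds] at hre him ⊢
  intro i
  simpa [Complex.re_add_im] using
    ((Complex.continuous_ofReal.tendsto 0).comp (hre i)).add
      (((Complex.continuous_ofReal.tendsto 0).comp (him i)).mul_const Complex.I)

end Complexification

section Hurwitz

variable {ι : Type*} [Fintype ι] [DecidableEq ι]

/-- A complex matrix is Hurwitz if all its eigenvalues lie in the open left half-plane. -/
def IsHurwitz (M : Matrix ι ι ℂ) : Prop :=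
  ∀ μ ∈ spectrum ℂ M, μ.re < 0

theorem tendsto_cexp_mul_pow_atTop_nhds_zero {μ : ℂ} (hμ : μ.re < 0) (k : ℕ) :
    Tendsto (fun t : ℝ => Complex.exp (t * μ) * (t : ℂ) ^ k) atTop (𝓝 0) := by
  rw [tendsto_zero_iff_norm_tendsto_zero]
  refine (tendsto_rpow_mul_exp_neg_mul_atTop_nhds_zero k (-μ.re) (neg_pos.2 hμ)).congr' ?_
  filter_upwards [eventually_ge_atTop 0] with t ht
  simp [Complex.norm_exp, abs_of_nonneg ht, mul_comm]

theorem IsHurwitz.tendsto_exp_smul_mulVec {M : Matrix ι ι ℂ} (hM : IsHurwitz M) (v : ι → ℂ) :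
    Tendsto (fun t : ℝ => NormedSpace.exp (t • M) *ᵥ v) atTop (𝓝 0) := by
  refine generalizedEigenvector_induction (M := M)
    (P := fun v => Tendsto (fun t : ℝ => NormedSpace.exp (t • M) *ᵥ v) atTop (𝓝 0))
    (by simp) (fun v w hv hw => by simpa [Matrix.mulVec_add] using hv.add hw)
    (fun μ hμ k v hv => ?_) v
  simp_rw [exp_smul_mulVec_of_generalizedEigenvector hv]
  simpa using tendsto_finsetSum (Finset.range k) fun j _ =>
    (tendsto_cexp_mul_pow_atTop_nhds_zero (hM μ hμ) j).smul_const
      ((j.factorial : ℂ)⁻¹ • ((M - μ • (1 : Matrix ι ι ℂ)) ^ j *ᵥ v))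

theorem IsHurwitz.tendsto_exp_smul_mulVec_real {M : Matrix ι ι ℝ}
    (hM : IsHurwitz (M.map Complex.ofRealHom)) (v : ι → ℝ) :
    Tendsto (fun t : ℝ => NormedSpace.exp (t • M) *ᵥ v) atTop (𝓝 0) := by
  have hre : Continuous fun x : ι → ℂ => Complex.re ∘ x := by fun_prop
  have hlim := (hre.tendsto 0).comp (hM.tendsto_exp_smul_mulVec (Complex.ofReal ∘ v))
  refine hlim.congr fun t => ?_
  rw [Function.comp_apply, ← exp_smul_map_ofReal, re_comp_map_ofReal_mulVec]
  rfl

theorem isHurwitz_one_kronecker_add_kronecker {κ : Type*} [Fintype κ] [DecidableEq κ]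
    {A B : Matrix ι ι ℂ} {G : Matrix κ κ ℂ} (h : ∀ l ∈ spectrum ℂ G, IsHurwitz (A + l • B)) :
    IsHurwitz ((1 : Matrix κ κ ℂ) ⊗ₖ A + G ⊗ₖ B) := by
  intro μ hμ
  obtain ⟨l, hl, hμl⟩ :=
    Set.mem_iUnion₂.1 (spectrum_one_kronecker_add_kronecker_subset A B G hμ)
  exact h l hl μ hμl

end Hurwitz

section OutputFeedback

variable {𝕜 n m : Type*} [RCLike 𝕜] [Fintype n]

/-- `S` is dissipative if `re (x* S x) ≤ 0` for all `x`, i.e. if the Euclidean norm does not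
increase along the flow of `S`. Over `ℝ`, skew-symmetric matrices are the lossless case. -/
def IsDissipative (S : Matrix n n 𝕜) : Prop :=
  ∀ x : n → 𝕜, RCLike.re (star x ⬝ᵥ S *ᵥ x) ≤ 0

/-- The pair `(H, S)` is detectable if every trajectory of `S` with zero output under `H` tends
to zero; observability is the case where such a trajectory must vanish. -/
def IsDetectable [DecidableEq n] (H : Matrix m n 𝕜) (S : Matrix n n 𝕜) : Prop :=
  ∀ x : n → 𝕜, (∀ t : ℝ, 0 ≤ t → H *ᵥ (NormedSpace.exp (t • S) *ᵥ x) = 0) →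
    Tendsto (fun t : ℝ => NormedSpace.exp (t • S) *ᵥ x) atTop (𝓝 0)

theorem isDissipative_of_add_transpose_eq_zero {S : Matrix n n ℝ} (hS : S + Sᵀ = 0) :
    IsDissipative S := by
  intro x
  have htranspose : x ⬝ᵥ Sᵀ *ᵥ x = x ⬝ᵥ S *ᵥ x := by
    rw [Matrix.dotProduct_mulVec, Matrix.vecMul_transpose, dotProduct_comm]
  have hsum : x ⬝ᵥ (S + Sᵀ) *ᵥ x = 0 := by rw [hS, Matrix.zero_mulVec, dotProduct_zero]
  rw [Matrix.add_mulVec, dotProduct_add, htranspose] at hsum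
  simp only [star_trivial, RCLike.re_to_real]
  linarith

theorem IsDissipative.map_ofReal {S : Matrix n n ℝ} (hS : IsDissipative S) :
    IsDissipative (S.map Complex.ofRealHom) := by
  intro x
  have hsplit : (star x ⬝ᵥ S.map Complex.ofRealHom *ᵥ x).re =
      (Complex.re ∘ x) ⬝ᵥ S *ᵥ (Complex.re ∘ x) + (Complex.im ∘ x) ⬝ᵥ S *ᵥ (Complex.im ∘ x) := by
    rw [← re_comp_map_ofReal_mulVec, ← im_comp_map_ofReal_mulVec]
    simp [dotProduct, Finset.sum_add_distrib]
  have hre := hS (Complex.re ∘ x)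
  have him := hS (Complex.im ∘ x)
  simp only [star_trivial, RCLike.re_to_real] at hre him
  exact hsplit.trans_le (add_nonpos hre him)

variable [DecidableEq n]

theorem IsDetectable.map_ofReal {H : Matrix m n ℝ} {S : Matrix n n ℝ} (hHS : IsDetectable H S) :
    IsDetectable (H.map Complex.ofRealHom) (S.map Complex.ofRealHom) := by
  intro x hx
  simp_rw [← exp_smul_map_ofReal] at hx ⊢
  refine tendsto_zero_of_re_of_im ?_ ?_
  · simp_rw [re_comp_map_ofReal_mulVec]
    refine hHS _ fun t ht => ?_
    rw [← re_comp_map_ofReal_mulVec, ← re_comp_map_ofReal_mulVec, hx t ht]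
    rfl
  · simp_rw [im_comp_map_ofReal_mulVec]
    refine hHS _ fun t ht => ?_
    rw [← im_comp_map_ofReal_mulVec, ← im_comp_map_ofReal_mulVec, hx t ht]
    rfl

theorem IsDetectable.eq_zero_of_mulVec_eq_smul {H : Matrix m n ℂ} {S : Matrix n n ℂ}
    (hHS : IsDetectable H S) {μ : ℂ} (hμ : 0 ≤ μ.re) {x : n → ℂ} (hSx : S *ᵥ x = μ • x)
    (hHx : H *ᵥ x = 0) : x = 0 := by
  have hlim : Tendsto (fun t : ℝ => Complex.exp (t * μ) • x) atTop (𝓝 0) := by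
    simpa only [exp_smul_mulVec_of_mulVec_eq_smul hSx] using hHS x fun t _ => by
      rw [exp_smul_mulVec_of_mulVec_eq_smul hSx, Matrix.mulVec_smul, hHx, smul_zero]
  have hnorm : ‖x‖ ≤ ‖(0 : n → ℂ)‖ := by
    refine ge_of_tendsto hlim.norm ?_
    filter_upwards [eventually_ge_atTop 0] with t ht
    rw [norm_smul, Complex.norm_exp]
    refine le_mul_of_one_le_left (norm_nonneg x) (Real.one_le_exp ?_)
    simpa using mul_nonneg ht hμ
  simpa using hnorm

open scoped ComplexOrder in
theorem IsDissipative.isHurwitz_add_smul_conjTranspose_mul [Fintype m] {H : Matrix m n ℂ}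
    {S : Matrix n n ℂ} (hS : IsDissipative S) (hHS : IsDetectable H S) {l : ℂ} (hl : l.re < 0) :
    IsHurwitz (S + l • (Hᴴ * H)) := by
  intro μ hμ
  obtain ⟨x, hx0, hx⟩ := mem_spectrum_iff_exists_mulVec_eq_smul.1 hμ
  rw [Matrix.add_mulVec, Matrix.smul_mulVec, ← Matrix.mulVec_mulVec] at hx
  by_contra! hμ0
  have henergy : star x ⬝ᵥ S *ᵥ x + l * (star (H *ᵥ x) ⬝ᵥ H *ᵥ x) = μ * (star x ⬝ᵥ x) := by
    simpa [dotProduct_add, Matrix.dotProduct_mulVec, Matrix.star_mulVec] using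
      congr(star x ⬝ᵥ $hx)
  obtain ⟨hxx, hxx_im⟩ := Complex.nonneg_iff.1 (dotProduct_star_self_nonneg x)
  obtain ⟨hyy, hyy_im⟩ := Complex.nonneg_iff.1 (dotProduct_star_self_nonneg (H *ᵥ x))
  have hHx : H *ᵥ x = 0 := by
    refine dotProduct_star_self_eq_zero.1 (Complex.ext ?_ hyy_im.symm)
    have hre := congrArg Complex.re henergy
    rw [Complex.add_re, Complex.mul_re, Complex.mul_re, ← hxx_im, ← hyy_im] at hre
    have hSx : (star x ⬝ᵥ S *ᵥ x).re ≤ 0 := hS x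
    have hμx := mul_nonneg hμ0 hxx
    rw [Complex.zero_re]
    nlinarith
  rw [hHx, Matrix.mulVec_zero, smul_zero, add_zero] at hx
  exact hx0 (hHS.eq_zero_of_mulVec_eq_smul hμ0 hx hHx)

end OutputFeedback

section Interconnection

variable {p : ℕ} {Γ : Matrix (Fin p) (Fin p) ℝ}

/-- The maximum principle: pairing row `i` of the eigenvalue equation with `x i` gives
`∑ l, Γ i l * (‖x i‖² - ⟪x i, x l⟫) = -μ.re * ‖x i‖² ≤ 0`, a sum of nonnegative terms. -/
theorem IsInterconnection.eq_of_forall_norm_le (hΓ : IsInterconnection Γ) {μ : ℂ}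
    (hμ : 0 ≤ μ.re) {x : Fin p → ℂ} (hx : Γ.map Complex.ofRealHom *ᵥ x = μ • x) {i j : Fin p}
    (hmax : ∀ l, ‖x l‖ ≤ ‖x i‖) (hij : 0 < Γ i j) : x j = x i := by
  have hterm : ∀ l ∈ Finset.univ, 0 ≤ Γ i l * (‖x i‖ ^ 2 - inner ℝ (x l) (x i)) := by
    intro l _
    obtain rfl | hil := eq_or_ne i l
    · simp
    · refine mul_nonneg (hΓ.1 i l hil) (sub_nonneg.2 ((real_inner_le_norm _ _).trans ?_))
      rw [sq]
      exact mul_le_mul_of_nonneg_right (hmax l) (norm_nonneg _)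
  have hrow : ∑ l, Γ i l * inner ℝ (x l) (x i) = μ.re * ‖x i‖ ^ 2 := calc
    _ = inner ℝ (∑ l, Γ i l • x l) (x i) := by simp only [sum_inner, real_inner_smul_left]
    _ = inner ℝ (μ * x i) (x i) := by
      congr 1
      simpa [Matrix.mulVec, dotProduct] using congrFun hx i
    _ = μ.re * ‖x i‖ ^ 2 := by
      rw [Complex.inner, ← Complex.normSq_eq_norm_sq, Complex.normSq_apply]
      simp
      ring
  have hsum : ∑ l, Γ i l * (‖x i‖ ^ 2 - inner ℝ (x l) (x i)) ≤ 0 := by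
    simp only [mul_sub, Finset.sum_sub_distrib, ← Finset.sum_mul, hΓ.2 i, hrow, zero_mul, zero_sub]
    exact neg_nonpos.2 (mul_nonneg hμ (sq_nonneg _))
  have hzero := (Finset.sum_eq_zero_iff_of_nonneg hterm).1
    (hsum.antisymm (Finset.sum_nonneg hterm)) j (Finset.mem_univ j)
  exact eq_of_norm_le_re_inner_eq_norm_sq (𝕜 := ℝ) (hmax j)
    (sub_eq_zero.1 ((mul_eq_zero.1 hzero).resolve_left hij.ne')).symm

theorem IsInterconnection.mulVec_const (hΓ : IsInterconnection Γ) (c : ℂ) :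
    Γ.map Complex.ofRealHom *ᵥ (fun _ => c) = 0 := by
  ext i
  simp [Matrix.mulVec, dotProduct, ← Finset.sum_mul, ← Complex.ofReal_sum, hΓ.2 i]

theorem IsInterconnection.eq_zero_of_mulVec_eq_smul (hΓ : IsInterconnection Γ) {μ : ℂ}
    (hμ : 0 ≤ μ.re) {x : Fin p → ℂ} (hx0 : x ≠ 0) (hx : Γ.map Complex.ofRealHom *ᵥ x = μ • x) :
    μ = 0 := by
  obtain ⟨k, hk⟩ := Function.ne_iff.1 hx0
  have : Nonempty (Fin p) := ⟨k⟩
  obtain ⟨i, hi⟩ := Finite.exists_max fun i => ‖x i‖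
  have hxi : x i ≠ 0 := norm_pos_iff.1 ((norm_pos_iff.2 hk).trans_le (hi k))
  have hneighbours (j : Fin p) : (Γ i j : ℂ) * x j = Γ i j * x i := by
    obtain rfl | hij := eq_or_ne i j
    · rfl
    obtain hzero | hpos := (hΓ.1 i j hij).eq_or_lt
    · simp [← hzero]
    · rw [hΓ.eq_of_forall_norm_le hμ hx hi hpos]
  have hrow : μ * x i = 0 := calc
    μ * x i = ∑ j, (Γ i j : ℂ) * x j := by
      simpa [Matrix.mulVec, dotProduct] using (congrFun hx i).symm
    _ = ∑ j, (Γ i j : ℂ) * x i := Finset.sum_congr rfl fun j _ => hneighbours j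
    _ = 0 := congrFun (hΓ.mulVec_const (x i)) i
  exact (mul_eq_zero.1 hrow).resolve_right hxi

theorem IsConnectedInterconnection.exists_eq_const_of_mulVec_eq_zero
    (hΓ : IsConnectedInterconnection Γ) {x : Fin p → ℂ} (hx : Γ.map Complex.ofRealHom *ᵥ x = 0) :
    ∃ c, x = fun _ => c := by
  obtain ⟨hI, k, hk⟩ := hΓ
  have : Nonempty (Fin p) := ⟨k⟩
  set y : Fin p → ℂ := x - fun _ => x k with hy
  have hΓy : Γ.map Complex.ofRealHom *ᵥ y = (0 : ℂ) • y := by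
    rw [hy, Matrix.mulVec_sub, hx, hI.mulVec_const, sub_zero, zero_smul]
  obtain ⟨i, hi⟩ := Finite.exists_max fun i => ‖y i‖
  have hpath (j : Fin p) (hij : Relation.ReflTransGen (fun a b => 0 < Γ a b) i j) : y j = y i := by
    induction hij with
    | refl => rfl
    | tail _ hbc ih =>
      rw [hI.eq_of_forall_norm_le Complex.zero_re.ge hΓy (by simpa only [ih] using hi) hbc, ih]
  have hyi : y i = 0 := by rw [← hpath k (hk i), hy, Pi.sub_apply, sub_self]
  refine ⟨x k, sub_eq_zero.1 (funext fun j => norm_le_zero_iff.1 ?_)⟩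
  exact (hi j).trans (by rw [hyi, norm_zero])

theorem IsConnectedInterconnection.isHurwitz_sub_vecMulVec (hΓ : IsConnectedInterconnection Γ)
    {r : Fin p → ℝ} (hr : r ᵥ* Γ = 0) (hr1 : ∑ i, r i = 1) :
    IsHurwitz ((Γ - vecMulVec (fun _ => (1 : ℝ)) r).map Complex.ofRealHom) := by
  intro μ hμ
  obtain ⟨x, hx0, hx⟩ := mem_spectrum_iff_exists_mulVec_eq_smul.1 hμ
  by_contra! hμ0
  set rc : Fin p → ℂ := Complex.ofRealHom ∘ r with hrc
  have hrcΓ : rc ᵥ* Γ.map Complex.ofRealHom = 0 := by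
    ext j
    simpa [hr] using (RingHom.map_vecMul Complex.ofRealHom Γ r j).symm
  have hrc1 : ∑ i, rc i = 1 := by simp [hrc, ← Complex.ofReal_sum, hr1]
  have hsplit : Γ.map Complex.ofRealHom *ᵥ x - (fun _ => rc ⬝ᵥ x) = μ • x := by
    rw [← hx]
    ext i
    simp [hrc, Matrix.mulVec, dotProduct, vecMulVec_apply, sub_mul, Finset.sum_sub_distrib]
  have hrcx : rc ⬝ᵥ x = 0 := by
    have hpair : -(rc ⬝ᵥ x) = μ * (rc ⬝ᵥ x) := by
      have hconst : rc ⬝ᵥ (fun _ => rc ⬝ᵥ x) = rc ⬝ᵥ x := by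
        simp only [dotProduct, ← Finset.sum_mul]
        rw [hrc1, one_mul]
      simpa [dotProduct_sub, Matrix.dotProduct_mulVec, hrcΓ, hconst] using congr(rc ⬝ᵥ $hsplit)
    have hμ1 : μ + 1 ≠ 0 := fun h => by
      have := congrArg Complex.re h
      simp only [Complex.add_re, Complex.one_re, Complex.zero_re] at this
      linarith
    exact (mul_eq_zero.1 (by linear_combination -hpair : (μ + 1) * (rc ⬝ᵥ x) = 0)).resolve_left hμ1
  have hΓx : Γ.map Complex.ofRealHom *ᵥ x = μ • x := by
    rw [← hsplit, hrcx]
    exact (sub_zero _).symm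
  rw [hΓ.1.eq_zero_of_mulVec_eq_smul hμ0 hx0 hΓx, zero_smul] at hΓx
  obtain ⟨c, rfl⟩ := hΓ.exists_eq_const_of_mulVec_eq_zero hΓx
  have hc : c = 0 := by simpa [dotProduct, ← Finset.sum_mul, hrc1] using hrcx
  exact hx0 (by rw [hc]; rfl)

end Interconnection

section Array

variable {n : Type*} [Fintype n]

theorem kronecker_mulVec_apply {R ι κ l : Type*} [NonUnitalSemiring R] [Fintype κ]
    (A : Matrix ι κ R) (B : Matrix l n R) (ξ : κ × n → R) (i : ι) (k : l) :
    ((A ⊗ₖ B) *ᵥ ξ) (i, k) = ∑ j, A i j * (B *ᵥ fun a => ξ (j, a)) k := by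
  simp only [Matrix.mulVec, dotProduct, Fintype.sum_prod_type, Matrix.kroneckerMap_apply,
    Finset.mul_sum, mul_assoc]

variable [DecidableEq n]

theorem exp_array_sub_kronecker_exp {𝕜 κ : Type*} [RCLike 𝕜] [Fintype κ] [DecidableEq κ]
    {S K : Matrix n n 𝕜} {Γ R : Matrix κ κ 𝕜} (hRΓ : R * Γ = 0) (hΓR : Γ * R = 0)
    (hRR : R * R = R) (t : ℝ) :
    NormedSpace.exp (t • ((1 : Matrix κ κ 𝕜) ⊗ₖ S + Γ ⊗ₖ K)) - R ⊗ₖ NormedSpace.exp (t • S) =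
      NormedSpace.exp (t • ((1 : Matrix κ κ 𝕜) ⊗ₖ S + (Γ - R) ⊗ₖ K)) *
        ((1 - R) ⊗ₖ (1 : Matrix n n 𝕜)) := by
  set A := (1 : Matrix κ κ 𝕜) ⊗ₖ S + Γ ⊗ₖ K with hA
  set B := (1 : Matrix κ κ 𝕜) ⊗ₖ S + (Γ - R) ⊗ₖ K with hB
  have hconsensus :
      SemiconjBy (R ⊗ₖ (1 : Matrix n n 𝕜)) (t • A) ((1 : Matrix κ κ 𝕜) ⊗ₖ (t • S)) := by
    rw [SemiconjBy, hA, mul_smul_comm, mul_add, ← Matrix.mul_kronecker_mul,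
      ← Matrix.mul_kronecker_mul, ← Matrix.mul_kronecker_mul, hRΓ]
    simp [Matrix.kronecker_smul]
  have hdisagreement : SemiconjBy ((1 - R) ⊗ₖ (1 : Matrix n n 𝕜)) (t • A) (t • B) := by
    have hleft : (1 - R) * Γ = Γ := by rw [sub_mul, one_mul, hRΓ, sub_zero]
    have hright : (Γ - R) * (1 - R) = Γ := by
      rw [mul_sub, mul_one, sub_mul, hΓR, hRR]
      abel
    rw [SemiconjBy, hA, hB, mul_smul_comm, smul_mul_assoc, mul_add, add_mul]
    simp only [← Matrix.mul_kronecker_mul, hleft, hright, one_mul, mul_one]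
  have hexp := mul_exp_eq_exp_mul_of_semiconjBy hconsensus
  rw [exp_one_kronecker, ← Matrix.mul_kronecker_mul, one_mul, mul_one] at hexp
  have hone : (1 - R) ⊗ₖ (1 : Matrix n n 𝕜) = 1 - R ⊗ₖ (1 : Matrix n n 𝕜) := by
    rw [eq_sub_iff_add_eq, ← Matrix.add_kronecker, sub_add_cancel, Matrix.one_kronecker_one]
  rw [← mul_exp_eq_exp_mul_of_semiconjBy hdisagreement, hone, sub_mul, one_mul, hexp]

theorem isHurwitz_array_map_ofReal {m κ : Type*} [Fintype m] [Fintype κ] [DecidableEq κ]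
    {S : Matrix n n ℝ} {H : Matrix m n ℝ} (hS : IsDissipative S) (hHS : IsDetectable H S)
    {G : Matrix κ κ ℝ} (hG : IsHurwitz (G.map Complex.ofRealHom)) :
    IsHurwitz (((1 : Matrix κ κ ℝ) ⊗ₖ S + G ⊗ₖ (Hᵀ * H)).map Complex.ofRealHom) := by
  have hmap : ((1 : Matrix κ κ ℝ) ⊗ₖ S + G ⊗ₖ (Hᵀ * H)).map Complex.ofRealHom =
      (1 : Matrix κ κ ℂ) ⊗ₖ S.map Complex.ofRealHom +
        G.map Complex.ofRealHom ⊗ₖ ((H.map Complex.ofRealHom)ᴴ * H.map Complex.ofRealHom) := by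
    ext ⟨i, k⟩ ⟨j, l⟩
    simp [Matrix.mul_apply, Matrix.one_apply, apply_ite Complex.ofReal]
  rw [hmap]
  exact isHurwitz_one_kronecker_add_kronecker fun l hl =>
    hS.map_ofReal.isHurwitz_add_smul_conjTranspose_mul hHS.map_ofReal (hG l hl)

theorem skew_symmetric_array_synchronizes_general {m : Type*} [Fintype m] {p : ℕ}
    {S : Matrix n n ℝ} {H : Matrix m n ℝ} (hS : IsDissipative S) (hHS : IsDetectable H S)
    {Γ : Matrix (Fin p) (Fin p) ℝ} (hΓ : IsConnectedInterconnection Γ)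
    {r : Fin p → ℝ} (hr : r ᵥ* Γ = 0) (hr1 : ∑ i, r i = 1) (ξ0 : Fin p × n → ℝ) :
    Tendsto (fun t : ℝ =>
        NormedSpace.exp (t • ((1 : Matrix (Fin p) (Fin p) ℝ) ⊗ₖ S + Γ ⊗ₖ (Hᵀ * H))) *ᵥ ξ0
          - (vecMulVec (fun _ => (1 : ℝ)) r ⊗ₖ NormedSpace.exp (t • S)) *ᵥ ξ0)
      atTop (𝓝 0) ∧
    ∀ i : Fin p,
      Tendsto (fun t : ℝ => (fun k : n =>
          (NormedSpace.exp (t • ((1 : Matrix (Fin p) (Fin p) ℝ) ⊗ₖ S + Γ ⊗ₖ (Hᵀ * H)))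
              *ᵥ ξ0) (i, k)
            - ∑ j : Fin p, r j * (NormedSpace.exp (t • S) *ᵥ fun l => ξ0 (j, l)) k))
        atTop (𝓝 0) := by
  set R := vecMulVec (fun _ : Fin p => (1 : ℝ)) r with hR
  have hRΓ : R * Γ = 0 := by rw [hR, Matrix.vecMulVec_mul, hr, Matrix.vecMulVec_zero]
  have hΓR : Γ * R = 0 := by
    ext i j
    simp [hR, Matrix.mul_apply, vecMulVec_apply, ← Finset.sum_mul, hΓ.1.2 i]
  have hRR : R * R = R := by
    ext i j
    simp [hR, Matrix.mul_apply, vecMulVec_apply, ← Finset.sum_mul, hr1]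
  have hlim := (isHurwitz_array_map_ofReal hS hHS
    (hΓ.isHurwitz_sub_vecMulVec hr hr1)).tendsto_exp_smul_mulVec_real
      (((1 - R) ⊗ₖ (1 : Matrix n n ℝ)) *ᵥ ξ0)
  simp_rw [Matrix.mulVec_mulVec, ← hR, ← exp_array_sub_kronecker_exp hRΓ hΓR hRR,
    Matrix.sub_mulVec] at hlim
  refine ⟨hlim, fun i => tendsto_pi_nhds.2 fun k => ?_⟩
  simpa [kronecker_mulVec_apply, hR, vecMulVec_apply] using tendsto_pi_nhds.1 hlim (i, k)

end Array

/-- Synchronization in an array of output-coupled skew-symmetric systems: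
with `S` skew-symmetric, `(H, S)` observable and `Γ` a connected interconnection,
the solution `ξ(t) = exp(t(I_p ⊗ S + Γ ⊗ HᵀH)) ξ(0)` converges to
`(1rᵀ ⊗ exp(tS)) ξ(0)`, and each block synchronizes to `ξ̄(t) = (rᵀ ⊗ exp(tS)) ξ(0)`. -/
theorem skew_symmetric_array_synchronizes
    (n m p : ℕ) (S : Matrix (Fin n) (Fin n) ℝ) (H : Matrix (Fin m) (Fin n) ℝ)
    (hS : S + Sᵀ = 0)
    (hobs : ∀ x : Fin n → ℝ,
      (∀ t : ℝ, 0 ≤ t → H *ᵥ (NormedSpace.exp (t • S) *ᵥ x) = 0) → x = 0)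
    (Γ : Matrix (Fin p) (Fin p) ℝ) (hΓ : IsConnectedInterconnection Γ)
    (r : Fin p → ℝ) (hr : r ᵥ* Γ = 0) (hr1 : ∑ i, r i = 1)
    (ξ0 : Fin p × Fin n → ℝ) :
    Tendsto (fun t : ℝ =>
        NormedSpace.exp (t • ((1 : Matrix (Fin p) (Fin p) ℝ) ⊗ₖ S + Γ ⊗ₖ (Hᵀ * H))) *ᵥ ξ0
          - (vecMulVec (fun _ => (1 : ℝ)) r ⊗ₖ NormedSpace.exp (t • S)) *ᵥ ξ0)
      atTop (nhds 0) ∧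
    ∀ i : Fin p,
      Tendsto (fun t : ℝ => (fun k : Fin n =>
          (NormedSpace.exp (t • ((1 : Matrix (Fin p) (Fin p) ℝ) ⊗ₖ S + Γ ⊗ₖ (Hᵀ * H)))
              *ᵥ ξ0) (i, k)
            - ∑ j : Fin p, r j * (NormedSpace.exp (t • S) *ᵥ fun l => ξ0 (j, l)) k))
        atTop (nhds 0) :=
  skew_symmetric_array_synchronizes_general (isDissipative_of_add_transpose_eq_zero hS)
    (fun x hx => by simp [hobs x hx]) hΓ hr hr1 ξ0
end

section
/- Let A ∈ ℝ^{n×n}, C ∈ ℝ^{m×n}, and let P ∈ ℝ^{n×n} be symmetric positive definite and satisfy the algebraic Riccati equation AP + PAᵀ + I_n − PCᵀCP = 0. Then the matrix A − PCᵀC is Hurwitz, i.e. every eigenvalue of A − PCᵀC (over ℂ) has strictly negative real part. -/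
open Matrix

/-!
Put `S = CᵀC` and `Q = I`. The closed-loop matrix `F = A - PS` satisfies `FP + PFᴴ = -(Q + PSP)`, so
`P` is a quadratic Lyapunov function for `Fᴴ`. If `w` is an eigenvector of `Fᴴ` for the eigenvalue
`μ̄`, pairing this identity with `w` gives `2 (re μ) (w* P w) = -w* (Q + PSP) w < 0`, while
`w* P w ≥ 0`.
-/

section

open scoped ComplexOrder

variable {n : Type*} [Fintype n]

lemma exists_conjTranspose_mulVec_eq_star_smul {K : Type*} [Field K] [StarRing K] [DecidableEq n]
    {F : Matrix n n K} {μ : K} (hμ : μ ∈ spectrum K F) :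
    ∃ w ≠ 0, Fᴴ *ᵥ w = star μ • w := by
  have hμ' : star μ ∈ spectrum K (toLin' Fᴴ) := by
    rwa [spectrum_toLin', ← star_eq_conjTranspose, spectrum.map_star, Set.star_mem_star]
  obtain ⟨w, hw⟩ := (Module.End.HasEigenvalue.of_mem_spectrum hμ').exists_hasEigenvector
  exact ⟨w, hw.2, by simpa using hw.apply_eq_smul⟩

lemma star_dotProduct_lyapunov_mulVec {R : Type*} [CommRing R] [StarRing R]
    {F : Matrix n n R} {w : n → R} {μ : R} (hw : Fᴴ *ᵥ w = star μ • w) (P : Matrix n n R) :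
    star w ⬝ᵥ (F * P + P * Fᴴ) *ᵥ w = (μ + star μ) * (star w ⬝ᵥ P *ᵥ w) := by
  have hw' : star w ᵥ* F = μ • star w := by
    simpa [star_mulVec] using congrArg star hw
  rw [add_mulVec, dotProduct_add, ← mulVec_mulVec, ← mulVec_mulVec, dotProduct_mulVec _ F, hw, hw',
    mulVec_smul, smul_dotProduct, dotProduct_smul, smul_eq_mul, smul_eq_mul, add_mul]

lemma re_neg_of_posDef_neg_lyapunov {𝕜 : Type*} [RCLike 𝕜] [DecidableEq n] {F P : Matrix n n 𝕜}
    (hP : P.PosSemidef) (hFP : (-(F * P + P * Fᴴ)).PosDef) {μ : 𝕜} (hμ : μ ∈ spectrum 𝕜 F) :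
    RCLike.re μ < 0 := by
  obtain ⟨w, hw₀, hw⟩ := exists_conjTranspose_mulVec_eq_star_smul hμ
  have hPw : 0 ≤ RCLike.re (star w ⬝ᵥ P *ᵥ w) := hP.re_dotProduct_nonneg w
  have hFPw : 2 * RCLike.re μ * RCLike.re (star w ⬝ᵥ P *ᵥ w) < 0 := by
    have h := hFP.re_dotProduct_pos hw₀
    rw [neg_mulVec, dotProduct_neg, star_dotProduct_lyapunov_mulVec hw, RCLike.star_def,
      RCLike.add_conj] at h
    simpa [mul_assoc] using h
  by_contra! hμ₀
  exact hFPw.not_ge (by positivity)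

lemma closedLoop_lyapunov_of_riccati {R : Type*} [Ring R] [StarRing R] {A P Q S : Matrix n n R}
    (hP : P.IsHermitian) (hS : S.IsHermitian) (hRiccati : A * P + P * Aᴴ + Q - P * S * P = 0) :
    (A - P * S) * P + P * (A - P * S)ᴴ = -(Q + P * S * P) := by
  rw [conjTranspose_sub, conjTranspose_mul, hP.eq, hS.eq, sub_mul, mul_sub, ← mul_assoc P S P,
    ← sub_eq_zero, ← hRiccati]
  abel

lemma re_neg_of_riccati {𝕜 : Type*} [RCLike 𝕜] [DecidableEq n] {A P Q S : Matrix n n 𝕜}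
    (hP : P.PosSemidef) (hQ : Q.PosDef) (hS : S.PosSemidef)
    (hRiccati : A * P + P * Aᴴ + Q - P * S * P = 0) {μ : 𝕜} (hμ : μ ∈ spectrum 𝕜 (A - P * S)) :
    RCLike.re μ < 0 := by
  have hPSP : (P * S * P).PosSemidef := by
    simpa only [hP.isHermitian.eq] using hS.conjTranspose_mul_mul_same P
  refine re_neg_of_posDef_neg_lyapunov hP ?_ hμ
  rw [closedLoop_lyapunov_of_riccati hP.isHermitian hS.isHermitian hRiccati, neg_neg]
  exact hQ.add_posSemidef hPSP

lemma conjTranspose_map_algebraMap {l m R A : Type*} [CommSemiring R] [StarRing R] [Semiring A]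
    [StarMul A] [Algebra R A] [StarModule R A] (M : Matrix l m R) :
    Mᴴ.map (algebraMap R A) = (M.map (algebraMap R A))ᴴ :=
  conjTranspose_map _ algebraMap_star_comm

variable {𝕜 𝕂 : Type*} [RCLike 𝕜] [RCLike 𝕂] [Algebra 𝕜 𝕂] [StarModule 𝕜 𝕂]

open scoped MatrixOrder in
lemma posSemidef_map_algebraMap {m : Type*} [Finite m] {M : Matrix m m 𝕜} (hM : M.PosSemidef) :
    (M.map (algebraMap 𝕜 𝕂)).PosSemidef := by
  classical
  cases nonempty_fintype m
  obtain ⟨B, rfl⟩ := CStarAlgebra.nonneg_iff_eq_star_mul_self.mp hM.nonneg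
  rw [star_eq_conjTranspose, Matrix.map_mul, conjTranspose_map_algebraMap]
  exact posSemidef_conjTranspose_mul_self _

lemma posDef_map_algebraMap {m : Type*} [Finite m] {M : Matrix m m 𝕜} (hM : M.PosDef) :
    (M.map (algebraMap 𝕜 𝕂)).PosDef := by
  classical
  cases nonempty_fintype m
  exact (posSemidef_map_algebraMap hM.posSemidef).posDef_iff_isUnit.mpr
    (hM.isUnit.map (algebraMap 𝕜 𝕂).mapMatrix)

theorem riccati_closed_loop_hurwitz_general [DecidableEq n] {A P Q S : Matrix n n 𝕜}
    (hP : P.PosSemidef) (hQ : Q.PosDef) (hS : S.PosSemidef)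
    (hRiccati : A * P + P * Aᴴ + Q - P * S * P = 0) :
    ∀ μ ∈ spectrum 𝕂 ((A - P * S).map (algebraMap 𝕜 𝕂)), RCLike.re μ < 0 := by
  intro μ hμ
  refine re_neg_of_riccati (A := A.map (algebraMap 𝕜 𝕂)) (posSemidef_map_algebraMap hP)
    (posDef_map_algebraMap hQ) (posSemidef_map_algebraMap hS) ?_ ?_
  · simpa only [map_sub, map_add, map_mul, map_zero, RingHom.mapMatrix_apply,
      conjTranspose_map_algebraMap] using congrArg (algebraMap 𝕜 𝕂).mapMatrix hRiccati
  · rwa [← Matrix.map_mul, ← Matrix.map_sub _ (map_sub _)]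

end

/-- If `P` is a symmetric positive-definite solution of the algebraic Riccati equation
`AP + PAᵀ + I - PCᵀCP = 0`, then `A - PCᵀC` is Hurwitz: every eigenvalue over `ℂ`
has strictly negative real part. -/
theorem riccati_closed_loop_hurwitz
    (n m : ℕ) (A : Matrix (Fin n) (Fin n) ℝ) (C : Matrix (Fin m) (Fin n) ℝ)
    (P : Matrix (Fin n) (Fin n) ℝ) (hPsymm : Pᵀ = P) (hPpos : P.PosDef)
    (hRiccati : A * P + P * Aᵀ + 1 - P * Cᵀ * C * P = 0) :
    ∀ μ ∈ spectrum ℂ ((A - P * Cᵀ * C).map Complex.ofReal), μ.re < 0 := by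
  rw [Matrix.mul_assoc P] at hRiccati ⊢
  exact riccati_closed_loop_hurwitz_general hPpos.posSemidef .one
    (posSemidef_conjTranspose_mul_self C) hRiccati
end

section
/- Let Γ ∈ ℝ^{p×p} satisfy Γ1 = 0, and let r ∈ ℝ^p satisfy rᵀΓ = 0 and rᵀ1 = 1. Then for every t ∈ ℝ, exp(t(Γ − 1rᵀ)) = exp(tΓ) − (1 − e^{−t}) 1rᵀ. -/
open Matrix

/-!
Suppose `Γu = au`, `rᵀΓ = arᵀ` and `rᵀu = 1`. Then `P = urᵀ` is an idempotent commuting with `Γ`, so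
`exp (t(Γ - P)) = exp (tΓ) exp (-tP)`. Idempotency gives `exp (-tP) = 1 + (e⁻ᵗ - 1) P`, and
`exp (tΓ) P = eᵗᵃ P` because `Γ` acts on the range of `P` as the scalar `a`.
-/

section BanachAlgebra

variable {R A : Type*} [NormedCommRing R] [NormedAlgebra ℚ R] [CompleteSpace R]
  [NormedRing A] [NormedAlgebra ℚ A] [CompleteSpace A] [Algebra R A] [ContinuousSMul R A]

theorem exp_mul_of_mul_eq_smul {x y : A} {a : R} (h : x * y = a • y) :
    NormedSpace.exp x * y = NormedSpace.exp a • y := by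
  have h_intertwine : SemiconjBy y (algebraMap R A a) x := by
    rw [SemiconjBy, h, Algebra.smul_def, Algebra.commutes]
  rw [← h_intertwine.exp_right.eq,
    ← NormedSpace.map_exp (algebraMap R A) (continuous_algebraMap R A), ← Algebra.commutes,
    Algebra.smul_def]

theorem exp_smul_of_isIdempotentElem {e : A} (he : IsIdempotentElem e) (c : R) :
    NormedSpace.exp (c • e) = 1 + (NormedSpace.exp c - 1) • e := by
  have h_range : NormedSpace.exp (c • e) * e = NormedSpace.exp c • e :=
    exp_mul_of_mul_eq_smul (by rw [smul_mul_assoc, he.eq])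
  have h_ker : NormedSpace.exp (c • e) * (1 - e) = 1 - e := by
    have h_zero : c • e * (1 - e) = (0 : R) • (1 - e) := by
      rw [smul_mul_assoc, he.mul_one_sub_self, smul_zero, zero_smul]
    rw [exp_mul_of_mul_eq_smul h_zero, NormedSpace.exp_zero, one_smul]
  calc NormedSpace.exp (c • e)
      = NormedSpace.exp (c • e) * e + NormedSpace.exp (c • e) * (1 - e) := by noncomm_ring
    _ = NormedSpace.exp c • e + (1 - e) := by rw [h_range, h_ker]
    _ = 1 + (NormedSpace.exp c - 1) • e := by module

theorem exp_add_smul_of_isIdempotentElem {x e : A} {a : R} (he : IsIdempotentElem e)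
    (hxe : x * e = a • e) (hex : e * x = a • e) (c : R) :
    NormedSpace.exp (x + c • e) =
      NormedSpace.exp x + (NormedSpace.exp a * (NormedSpace.exp c - 1)) • e := by
  have h_comm : Commute x (c • e) := Commute.smul_right (hxe.trans hex.symm) c
  rw [NormedSpace.exp_add_of_commute h_comm, exp_smul_of_isIdempotentElem he, mul_add, mul_one,
    mul_smul_comm, exp_mul_of_mul_eq_smul hxe, smul_smul, mul_comm (NormedSpace.exp a)]

end BanachAlgebra

theorem isIdempotentElem_vecMulVec {n R : Type*} [Fintype n] [CommSemiring R] {u r : n → R}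
    (hru : r ⬝ᵥ u = 1) : IsIdempotentElem (vecMulVec u r) := by
  rw [IsIdempotentElem, vecMulVec_mul_vecMulVec, hru, one_smul]

theorem exp_sub_one_rT_general {n R : Type*} [Fintype n] [DecidableEq n] [NormedCommRing R]
    [NormedAlgebra ℚ R] [CompleteSpace R] (Γ : Matrix n n R) {u r : n → R} {a : R}
    (hΓu : Γ *ᵥ u = a • u) (hrΓ : r ᵥ* Γ = a • r) (hru : r ⬝ᵥ u = 1) (t : R) :
    NormedSpace.exp (t • (Γ - vecMulVec u r)) =
      NormedSpace.exp (t • Γ)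
        - (NormedSpace.exp (t * a) * (1 - NormedSpace.exp (-t))) • vecMulVec u r := by
  have h_right : t • Γ * vecMulVec u r = (t * a) • vecMulVec u r := by
    rw [smul_mul_assoc, mul_vecMulVec, hΓu, smul_vecMulVec, smul_smul]
  have h_left : vecMulVec u r * t • Γ = (t * a) • vecMulVec u r := by
    rw [mul_smul_comm, vecMulVec_mul, hrΓ, vecMulVec_smul, smul_smul]
  have h_exp : NormedSpace.exp (t • Γ + (-t) • vecMulVec u r) = NormedSpace.exp (t • Γ) +
      (NormedSpace.exp (t * a) * (NormedSpace.exp (-t) - 1)) • vecMulVec u r := by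
    open scoped Matrix.Norms.Operator in
    -- Instance search does not identify the uniformity of the operator norm with the product one.
    have : @CompleteSpace (Matrix n n R) PseudoMetricSpace.toUniformSpace :=
      inferInstanceAs (CompleteSpace (n → n → R))
    exact exp_add_smul_of_isIdempotentElem (isIdempotentElem_vecMulVec hru) h_right h_left (-t)
  rw [smul_sub, sub_eq_add_neg, ← neg_smul, h_exp]
  module

/-- If `Γ1 = 0`, `rᵀΓ = 0` and `rᵀ1 = 1`, then
`exp(t(Γ - 1rᵀ)) = exp(tΓ) - (1 - e^{-t}) 1rᵀ` for all `t`. -/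
theorem exp_sub_one_rT
    (p : ℕ) (Γ : Matrix (Fin p) (Fin p) ℝ)
    (hΓ1 : Γ *ᵥ (fun _ => 1) = 0)
    (r : Fin p → ℝ) (hr : r ᵥ* Γ = 0) (hr1 : ∑ i, r i = 1) (t : ℝ) :
    NormedSpace.exp (t • (Γ - vecMulVec (fun _ => (1 : ℝ)) r)) =
      NormedSpace.exp (t • Γ)
        - (1 - Real.exp (-t)) • vecMulVec (fun _ => (1 : ℝ)) r := by
  simpa [Real.exp_eq_exp_ℝ] using exp_sub_one_rT_general Γ (u := fun _ => 1) (a := 0)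
    (by simpa using hΓ1) (by simpa using hr) (by simpa [dotProduct] using hr1) t
end

section
/- Let Γ ∈ ℝ^{p×p} be a connected interconnection. Then there exists a unique r ∈ ℝ^p with rᵀΓ = 0 and rᵀ1 = 1, and for this r one has exp(tΓ) → 1rᵀ as t → ∞. -/
open Matrix Filter Topology
open scoped Kronecker

/-!
For `t ≥ 0` the matrix `exp (tΓ)` is row stochastic, and connectedness gives `exp Γ` a strictly
positive column, with entries at least some `δ > 0`. By Doeblin's argument `exp Γ` then shrinks
the oscillation `max x - min x` of every vector `x` by the factor `1 - δ`, so the rows of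
`exp (tΓ)` become equal in the limit. A left null vector `r` of `Γ` satisfies `rᵀ exp (tΓ) = rᵀ`,
hence `(∑ rᵢ) exp (tΓ) → 1rᵀ`. This is the claimed limit when `∑ rᵢ = 1`, and it forces `r = 0`
when `∑ rᵢ = 0`, which gives uniqueness; existence then follows because `Γ1 = 0` makes `Γ` singular.
-/

open NormedSpace (exp)
open Metric (diam diam_nonneg diam_le_of_forall_dist_le dist_le_diam_of_mem)
open scoped Nat

section Exponential

variable {n 𝕜 : Type*} [Fintype n] [DecidableEq n] [RCLike 𝕜]

open scoped Matrix.Norms.Operator in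
lemma hasSum_matrix_exp (A : Matrix n n 𝕜) :
    HasSum (fun k : ℕ => (k ! : 𝕜)⁻¹ • A ^ k) (exp A) :=
  NormedSpace.exp_series_hasSum_exp' A

lemma hasSum_matrix_exp_apply (A : Matrix n n 𝕜) (i j : n) :
    HasSum (fun k : ℕ => (k ! : 𝕜)⁻¹ * (A ^ k) i j) (exp A i j) :=
  Pi.hasSum.1 (Pi.hasSum.1 (hasSum_matrix_exp A) i) j

lemma pow_mulVec_of_mulVec_eq_smul {R : Type*} [CommSemiring R] {A : Matrix n n R} {v : n → R}
    {μ : R} (h : A *ᵥ v = μ • v) (k : ℕ) : (A ^ k) *ᵥ v = μ ^ k • v := by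
  induction k with
  | zero => simp
  | succ k ih => rw [pow_succ, ← mulVec_mulVec, h, mulVec_smul, ih, smul_smul, pow_succ']

lemma exp_mulVec_of_mulVec_eq_smul {A : Matrix n n 𝕜} {v : n → 𝕜} {μ : 𝕜}
    (h : A *ᵥ v = μ • v) : exp A *ᵥ v = exp μ • v := by
  have hA : HasSum (fun k : ℕ => ((k ! : 𝕜)⁻¹ • A ^ k) *ᵥ v) (exp A *ᵥ v) :=
    (hasSum_matrix_exp A).map (mulVec.addMonoidHomLeft v)
      (continuous_id.matrix_mulVec continuous_const)
  have hμ : HasSum (fun k : ℕ => ((k ! : 𝕜)⁻¹ • μ ^ k) • v) (exp μ • v) :=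
    (NormedSpace.exp_series_hasSum_exp' μ).smul_const v
  refine hA.unique (hμ.congr_fun fun k => ?_)
  rw [smul_mulVec, pow_mulVec_of_mulVec_eq_smul h, smul_assoc]

lemma exp_mulVec_of_mulVec_eq_zero {A : Matrix n n 𝕜} {v : n → 𝕜} (h : A *ᵥ v = 0) :
    exp A *ᵥ v = v := by
  simpa using exp_mulVec_of_mulVec_eq_smul (h.trans (zero_smul 𝕜 v).symm)

lemma vecMul_exp_of_vecMul_eq_zero {A : Matrix n n 𝕜} {v : n → 𝕜} (h : v ᵥ* A = 0) :
    v ᵥ* exp A = v := by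
  rw [← mulVec_transpose, ← Matrix.exp_transpose]
  exact exp_mulVec_of_mulVec_eq_zero (by rwa [mulVec_transpose])

open scoped Matrix.Norms.Operator in
lemma exp_add_smul_one (A : Matrix n n 𝕜) (c : 𝕜) :
    exp (A + c • (1 : Matrix n n 𝕜)) = exp c • exp A := by
  have hc : exp (algebraMap 𝕜 (Matrix n n 𝕜) c) = algebraMap 𝕜 (Matrix n n 𝕜) (exp c) :=
    (NormedSpace.algebraMap_exp_comm c).symm
  rw [← Algebra.algebraMap_eq_smul_one,
    Matrix.exp_add_of_commute _ _ (Algebra.commutes c A).symm, hc, ← Algebra.commutes,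
    Algebra.smul_def]

lemma exp_smul_eq_mul_exp_pow_floor (A : Matrix n n ℝ) (t : ℝ) :
    exp (t • A) = exp ((t - ⌊t⌋₊) • A) * exp A ^ ⌊t⌋₊ := by
  have hcomm : Commute ((t - ⌊t⌋₊) • A) (⌊t⌋₊ • A) :=
    ((Commute.refl A).smul_left _).smul_right _
  rw [← Matrix.exp_nsmul, ← Matrix.exp_add_of_commute _ _ hcomm, ← Nat.cast_smul_eq_nsmul ℝ,
    ← add_smul, sub_add_cancel]

end Exponential

section Nonneg

variable {n : Type*} [Fintype n] [DecidableEq n]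

lemma exists_pow_apply_pos_of_reflTransGen {R : Type*} [Semiring R] [PartialOrder R]
    [IsStrictOrderedRing R] {A : Matrix n n R} (hA : ∀ i j, 0 ≤ A i j) {i k : n}
    (h : Relation.ReflTransGen (fun a b => 0 < A a b) i k) : ∃ m : ℕ, 0 < (A ^ m) i k := by
  induction h with
  | refl => exact ⟨0, by simp⟩
  | @tail b c _ hbc ih =>
    obtain ⟨m, hm⟩ := ih
    refine ⟨m + 1, ?_⟩
    rw [pow_succ, mul_apply]
    exact Finset.sum_pos' (fun l _ => mul_nonneg (pow_apply_nonneg hA m i l) (hA l c))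
      ⟨b, Finset.mem_univ b, mul_pos hm hbc⟩

variable {A : Matrix n n ℝ}

lemma exp_apply_nonneg (hA : ∀ i j, 0 ≤ A i j) (i j : n) : 0 ≤ exp A i j :=
  (hasSum_matrix_exp_apply A i j).nonneg fun k =>
    mul_nonneg (by positivity) (pow_apply_nonneg hA k i j)

lemma exp_apply_pos_of_reflTransGen (hA : ∀ i j, 0 ≤ A i j) {i k : n}
    (h : Relation.ReflTransGen (fun a b => 0 < A a b) i k) : 0 < exp A i k := by
  obtain ⟨m, hm⟩ := exists_pow_apply_pos_of_reflTransGen hA h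
  have hterm : 0 < (m ! : ℝ)⁻¹ * (A ^ m) i k := mul_pos (by positivity) hm
  exact hterm.trans_le <| le_hasSum (hasSum_matrix_exp_apply A i k) m fun l _ =>
    mul_nonneg (by positivity) (pow_apply_nonneg hA l i k)

end Nonneg

/-- A Metzler matrix: all off-diagonal entries are nonnegative, the diagonal being unconstrained.
These are the matrices which become entrywise nonnegative after adding a multiple of `1`, so
their exponentials are entrywise nonnegative. -/
def IsMetzler {n R : Type*} [Zero R] [LE R] (A : Matrix n n R) : Prop :=
  ∀ i j, i ≠ j → 0 ≤ A i j

namespace IsMetzler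

variable {n : Type*} {A : Matrix n n ℝ}

lemma smul (hA : IsMetzler A) {t : ℝ} (ht : 0 ≤ t) : IsMetzler (t • A) :=
  fun i j hij => mul_nonneg ht (hA i j hij)

lemma exists_add_smul_one_nonneg [Finite n] [DecidableEq n] (hA : IsMetzler A) :
    ∃ c : ℝ, 0 ≤ c ∧ ∀ i j, 0 ≤ (A + c • (1 : Matrix n n ℝ)) i j := by
  obtain ⟨c, hc⟩ := (Set.finite_range fun i => -A i i).bddAbove
  refine ⟨max 0 c, le_max_left 0 c, fun i j => ?_⟩
  obtain rfl | hij := eq_or_ne i j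
  · have hi : -A i i ≤ max 0 c := (hc (Set.mem_range_self i)).trans (le_max_right 0 c)
    simpa using neg_le_iff_add_nonneg'.1 hi
  · simpa [hij] using hA i j hij

variable [Fintype n] [DecidableEq n]

lemma exp_apply_nonneg (hA : IsMetzler A) (i j : n) : 0 ≤ exp A i j := by
  obtain ⟨c, -, hc⟩ := hA.exists_add_smul_one_nonneg
  have h := _root_.exp_apply_nonneg hc i j
  rw [exp_add_smul_one, ← Real.exp_eq_exp_ℝ] at h
  exact nonneg_of_mul_nonneg_right h (Real.exp_pos c)

lemma exp_apply_pos_of_reflTransGen (hA : IsMetzler A) {i k : n}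
    (h : Relation.ReflTransGen (fun a b => 0 < A a b) i k) : 0 < exp A i k := by
  obtain ⟨c, hc0, hc⟩ := hA.exists_add_smul_one_nonneg
  have hle (a b : n) : A a b ≤ (A + c • (1 : Matrix n n ℝ)) a b := by
    have : 0 ≤ (1 : Matrix n n ℝ) a b := by rw [one_apply]; positivity
    exact le_add_of_nonneg_right (mul_nonneg hc0 this)
  have hpos := _root_.exp_apply_pos_of_reflTransGen hc
    (Relation.ReflTransGen.mono (fun a b hab => hab.trans_le (hle a b)) _ _ h)
  rw [exp_add_smul_one, ← Real.exp_eq_exp_ℝ] at hpos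
  exact (mul_pos_iff_of_pos_left (Real.exp_pos c)).1 hpos

lemma exp_mem_rowStochastic (hA : IsMetzler A) (hA1 : A *ᵥ 1 = 0) :
    exp A ∈ rowStochastic ℝ n :=
  ⟨hA.exp_apply_nonneg, exp_mulVec_of_mulVec_eq_zero hA1⟩

end IsMetzler

section Contraction

variable {n : Type*} [Fintype n] [DecidableEq n]

lemma mulVec_mem_Icc_of_mem_rowStochastic {R : Type*} [CommRing R] [LinearOrder R]
    [IsStrictOrderedRing R] {S : Matrix n n R} (hS : S ∈ rowStochastic R n) {i k : n} {δ : R}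
    (hδ : δ ≤ S i k) {x : n → R} {a b : R} (hx : ∀ j, x j ∈ Set.Icc a b) :
    (S *ᵥ x) i ∈ Set.Icc (δ * x k + (1 - δ) * a) (δ * x k + (1 - δ) * b) := by
  -- Split the `i`-th row as `δ eₖ` plus a nonnegative remainder `w` of total mass `1 - δ`.
  set w : n → R := S i - Pi.single k δ with hw
  have hw0 (j : n) : 0 ≤ w j := by
    obtain rfl | hjk := eq_or_ne j k
    · simpa [hw] using hδ
    · simpa [hw, hjk] using hS.1 i j
  have hw1 : ∑ j, w j = 1 - δ := by simp [hw, sum_row_of_mem_rowStochastic hS]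
  have hSx : (S *ᵥ x) i = δ * x k + ∑ j, w j * x j := by
    simp [hw, mulVec, dotProduct, sub_mul, Pi.single_apply]
  rw [hSx, ← hw1, Finset.sum_mul, Finset.sum_mul]
  exact ⟨by gcongr with j; exacts [hw0 j, (hx j).1], by gcongr with j; exacts [hw0 j, (hx j).2]⟩

variable {S : Matrix n n ℝ} {k : n} {δ : ℝ}

lemma diam_range_mulVec_le (hS : S ∈ rowStochastic ℝ n) (hδ : ∀ i, δ ≤ S i k) (x : n → ℝ) :
    diam (Set.range (S *ᵥ x)) ≤ (1 - δ) * diam (Set.range x) := by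
  have hbdd := (Set.finite_range x).isBounded
  have hSx (i : n) := mulVec_mem_Icc_of_mem_rowStochastic hS (hδ i) fun j =>
    hbdd.subset_Icc_sInf_sSup (Set.mem_range_self j)
  have hdist (i j : n) : dist ((S *ᵥ x) i) ((S *ᵥ x) j) ≤ (1 - δ) * diam (Set.range x) := by
    rw [Real.diam_eq hbdd]
    exact (Real.dist_le_of_mem_Icc (hSx i) (hSx j)).trans_eq (by ring)
  refine diam_le_of_forall_dist_le (dist_nonneg.trans (hdist k k)) ?_
  rintro _ ⟨i, rfl⟩ _ ⟨j, rfl⟩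
  exact hdist i j

lemma diam_range_pow_mulVec_le (hS : S ∈ rowStochastic ℝ n) (hδ : ∀ i, δ ≤ S i k) (x : n → ℝ)
    (m : ℕ) : diam (Set.range ((S ^ m) *ᵥ x)) ≤ (1 - δ) ^ m * diam (Set.range x) := by
  have hδ1 : 0 ≤ 1 - δ := sub_nonneg.2 ((hδ k).trans (le_one_of_mem_rowStochastic hS))
  induction m with
  | zero => simp
  | succ m ih =>
    calc diam (Set.range ((S ^ (m + 1)) *ᵥ x))
        = diam (Set.range (S *ᵥ (S ^ m) *ᵥ x)) := by rw [pow_succ', mulVec_mulVec]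
      _ ≤ (1 - δ) * diam (Set.range ((S ^ m) *ᵥ x)) := diam_range_mulVec_le hS hδ _
      _ ≤ (1 - δ) * ((1 - δ) ^ m * diam (Set.range x)) := by gcongr
      _ = (1 - δ) ^ (m + 1) * diam (Set.range x) := by ring

end Contraction

section Limit

variable {n : Type*} [Fintype n] [DecidableEq n] {A : Matrix n n ℝ} {k : n}

lemma diam_range_exp_smul_mulVec_le (hA : IsMetzler A) (hA1 : A *ᵥ 1 = 0) {δ : ℝ}
    (hδ : ∀ i, δ ≤ exp A i k) (x : n → ℝ) {t : ℝ} (ht : 0 ≤ t) :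
    diam (Set.range (exp (t • A) *ᵥ x)) ≤ (1 - δ) ^ ⌊t⌋₊ * diam (Set.range x) := by
  have hfract : exp ((t - ⌊t⌋₊) • A) ∈ rowStochastic ℝ n :=
    (hA.smul (sub_nonneg.2 (Nat.floor_le ht))).exp_mem_rowStochastic
      (by rw [smul_mulVec, hA1, smul_zero])
  calc diam (Set.range (exp (t • A) *ᵥ x))
      = diam (Set.range (exp ((t - ⌊t⌋₊) • A) *ᵥ (exp A ^ ⌊t⌋₊) *ᵥ x)) := by
        rw [mulVec_mulVec, ← exp_smul_eq_mul_exp_pow_floor]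
    _ ≤ (1 - 0) * diam (Set.range ((exp A ^ ⌊t⌋₊) *ᵥ x)) :=
        diam_range_mulVec_le hfract (fun i => hfract.1 i k) _
    _ ≤ (1 - δ) ^ ⌊t⌋₊ * diam (Set.range x) := by
        rw [sub_zero, one_mul]
        exact diam_range_pow_mulVec_le (hA.exp_mem_rowStochastic hA1) hδ x _

lemma tendsto_diam_range_exp_smul_mulVec (hA : IsMetzler A) (hA1 : A *ᵥ 1 = 0)
    (hk : ∀ i, Relation.ReflTransGen (fun a b => 0 < A a b) i k) (x : n → ℝ) :
    Tendsto (fun t : ℝ => diam (Set.range (exp (t • A) *ᵥ x))) atTop (𝓝 0) := by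
  have : Nonempty n := ⟨k⟩
  obtain ⟨i₀, hmin⟩ := Finite.exists_min fun i => exp A i k
  have hpos : 0 < exp A i₀ k := hA.exp_apply_pos_of_reflTransGen (hk i₀)
  have hle : exp A i₀ k ≤ 1 := le_one_of_mem_rowStochastic (hA.exp_mem_rowStochastic hA1)
  have hlim : Tendsto (fun t : ℝ => (1 - exp A i₀ k) ^ ⌊t⌋₊ * diam (Set.range x)) atTop (𝓝 0) := by
    simpa using ((tendsto_pow_atTop_nhds_zero_of_lt_one (sub_nonneg.2 hle)
      (sub_lt_self 1 hpos)).comp tendsto_nat_floor_atTop).mul_const (diam (Set.range x))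
  refine squeeze_zero' (.of_forall fun _ => diam_nonneg) ?_ hlim
  filter_upwards [eventually_ge_atTop 0] with t ht
  exact diam_range_exp_smul_mulVec_le hA hA1 hmin x ht

lemma tendsto_exp_smul_apply_sub_apply (hA : IsMetzler A) (hA1 : A *ᵥ 1 = 0)
    (hk : ∀ i, Relation.ReflTransGen (fun a b => 0 < A a b) i k) (i j l : n) :
    Tendsto (fun t : ℝ => exp (t • A) i l - exp (t • A) j l) atTop (𝓝 0) := by
  refine squeeze_zero_norm (fun t => ?_)
    (tendsto_diam_range_exp_smul_mulVec hA hA1 hk (Pi.single l 1))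
  rw [← dist_eq_norm, mulVec_single_one]
  exact dist_le_diam_of_mem (Set.finite_range _).isBounded ⟨i, rfl⟩ ⟨j, rfl⟩

lemma tendsto_sum_smul_exp_smul (hA : IsMetzler A) (hA1 : A *ᵥ 1 = 0)
    (hk : ∀ i, Relation.ReflTransGen (fun a b => 0 < A a b) i k) {r : n → ℝ} (hr : r ᵥ* A = 0) :
    Tendsto (fun t : ℝ => (∑ j, r j) • exp (t • A)) atTop (𝓝 (vecMulVec 1 r)) := by
  refine tendsto_pi_nhds.2 fun i => tendsto_pi_nhds.2 fun l => ?_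
  have hdiff : Tendsto (fun t : ℝ => r l + ∑ j, r j * (exp (t • A) i l - exp (t • A) j l)) atTop
      (𝓝 (r l + ∑ j, r j * 0)) :=
    tendsto_const_nhds.add <| tendsto_finsetSum _ fun j _ =>
      (tendsto_exp_smul_apply_sub_apply hA hA1 hk i j l).const_mul (r j)
  have hinv (t : ℝ) : ∑ j, r j * exp (t • A) j l = r l :=
    congrFun (vecMul_exp_of_vecMul_eq_zero (by rw [vecMul_smul, hr, smul_zero])) l
  simpa [mul_sub, Finset.sum_sub_distrib, hinv, ← Finset.sum_mul, vecMulVec_apply] using hdiff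

end Limit

lemma eq_zero_of_vecMul_eq_zero_of_sum_eq_zero {n : Type*} [Fintype n] {A : Matrix n n ℝ} {k : n}
    (hA : IsMetzler A) (hA1 : A *ᵥ 1 = 0)
    (hk : ∀ i, Relation.ReflTransGen (fun a b => 0 < A a b) i k)
    {r : n → ℝ} (hr : r ᵥ* A = 0) (hsum : ∑ j, r j = 0) : r = 0 := by
  classical
  have hlim := tendsto_sum_smul_exp_smul hA hA1 hk hr
  simp only [hsum, zero_smul] at hlim
  have hzero : vecMulVec 1 r = (0 : Matrix n n ℝ) := tendsto_nhds_unique hlim tendsto_const_nhds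
  ext l
  simpa [vecMulVec_apply] using congrFun₂ hzero k l

lemma exists_ne_zero_vecMul_eq_zero_of_mulVec_one_eq_zero {n R : Type*} [Fintype n]
    [Nonempty n] [CommRing R] [IsDomain R] {A : Matrix n n R} (hA1 : A *ᵥ 1 = 0) :
    ∃ v ≠ 0, v ᵥ* A = 0 := by
  classical
  exact exists_vecMul_eq_zero_iff.2 (exists_mulVec_eq_zero_iff.1 ⟨1, one_ne_zero, hA1⟩)

theorem connected_interconnection_exp_limit_general {n : Type*} [Fintype n] [DecidableEq n]
    {Γ : Matrix n n ℝ} (hΓ : IsMetzler Γ) (hΓ1 : Γ *ᵥ 1 = 0) {k : n}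
    (hk : ∀ i, Relation.ReflTransGen (fun a b => 0 < Γ a b) i k) :
    (∃! r : n → ℝ, r ᵥ* Γ = 0 ∧ ∑ i, r i = 1) ∧
    ∀ r : n → ℝ, r ᵥ* Γ = 0 → ∑ i, r i = 1 →
      Tendsto (fun t : ℝ => exp (t • Γ)) atTop (𝓝 (vecMulVec 1 r)) := by
  have hinj {r : n → ℝ} := eq_zero_of_vecMul_eq_zero_of_sum_eq_zero (r := r) hΓ hΓ1 hk
  have : Nonempty n := ⟨k⟩
  refine ⟨existsUnique_of_exists_of_unique ?_ ?_, fun r hr hr1 => ?_⟩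
  · obtain ⟨v, hv0, hv⟩ := exists_ne_zero_vecMul_eq_zero_of_mulVec_one_eq_zero hΓ1
    have hsum : ∑ i, v i ≠ 0 := fun h => hv0 (hinj hv h)
    refine ⟨(∑ i, v i)⁻¹ • v, by rw [smul_vecMul, hv, smul_zero], ?_⟩
    simp [← Finset.mul_sum, hsum]
  · rintro r s ⟨hr, hr1⟩ ⟨hs, hs1⟩
    exact sub_eq_zero.1 (hinj (by rw [sub_vecMul, hr, hs, sub_zero]) (by simp [hr1, hs1]))
  · simpa [hr1] using tendsto_sum_smul_exp_smul hΓ hΓ1 hk hr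

/-- For a connected interconnection `Γ` there is a unique `r` with `rᵀΓ = 0` and `rᵀ1 = 1`,
and for this `r` one has `exp(tΓ) → 1rᵀ` as `t → ∞`. -/
theorem connected_interconnection_exp_limit
    (p : ℕ) (Γ : Matrix (Fin p) (Fin p) ℝ) (hΓ : IsConnectedInterconnection Γ) :
    (∃! r : Fin p → ℝ, r ᵥ* Γ = 0 ∧ ∑ i, r i = 1) ∧
    ∀ r : Fin p → ℝ, r ᵥ* Γ = 0 → ∑ i, r i = 1 →
      Tendsto (fun t : ℝ => NormedSpace.exp (t • Γ)) atTop
        (nhds (vecMulVec (fun _ => (1 : ℝ)) r)) :=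
  have ⟨⟨hoff, hrow⟩, _, hk⟩ := hΓ
  connected_interconnection_exp_limit_general hoff
    (funext fun i => by simpa [mulVec, dotProduct] using hrow i) hk
end
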